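/- arXiv:1705.01052 — 4 statements merged into one kernel-verified Lean document; each statement's English description precedes it below -/
import Mathlib

section
/- Let s > 1, M > 0, and σ := 1/(s−1). Define φ_s : ℝ → ℝ by φ_s(ρ) := 1 for ρ ≤ 0, φ_s(ρ) := 0 for ρ ≥ 1, and φ_s(ρ) := e^{−M/(1−ρ)^σ} / (e^{−M/ρ^σ} + e^{−M/(1−ρ)^σ}) for ρ ∈ (0,1). Then φ_s is of class C^∞ on ℝ, φ_s^{(p)}(0) = φ_s^{(p)}(1) = 0 for all integers p ≥ 1, and φ_s is Gevrey of order s on every compact interval of ℝ: for every compact interval [a,b] there exist constants C, R > 0 such that |φ_s^{(p)}(ρ)| ≤ C (p!)^s / R^p for all ρ ∈ [a,b] and all integers p ≥ 0. -/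
open Real Set Filter

/-- The Gevrey step function of order `s > 1` with parameter `M > 0`,
where `σ = 1/(s-1)`. -/
noncomputable def phiStep (s M : ℝ) (ρ : ℝ) : ℝ :=
  if ρ ≤ 0 then 1
  else if 1 ≤ ρ then 0
  else Real.exp (-M / (1 - ρ) ^ ((s - 1)⁻¹)) /
    (Real.exp (-M / ρ ^ ((s - 1)⁻¹)) + Real.exp (-M / (1 - ρ) ^ ((s - 1)⁻¹)))


open scoped Topology

lemma aux_real_deriv {U : Set ℂ} (hU : IsOpen U) {F : ℂ → ℂ} (hF : DifferentiableOn ℂ F U)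
    {f : ℝ → ℝ} (hf : ∀ x : ℝ, (x : ℂ) ∈ U → f x = (F x).re) (n : ℕ) :
    ∀ x : ℝ, (x : ℂ) ∈ U → iteratedDeriv n f x = (iteratedDeriv n F x).re ∧
      DifferentiableAt ℝ (iteratedDeriv n f) x := by
  have hA := hF.analyticOnNhd hU
  have key : ∀ n : ℕ, (∀ x : ℝ, (x : ℂ) ∈ U → iteratedDeriv n f x = (iteratedDeriv n F x).re) →
      ∀ x : ℝ, (x : ℂ) ∈ U → HasDerivAt (iteratedDeriv n f) (iteratedDeriv (n+1) F x).re x := by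
    intro n ih x hx
    have h1 : DifferentiableAt ℂ (iteratedDeriv n F) (x : ℂ) := by
      have := hA.iterated_deriv n x hx
      rw [← iteratedDeriv_eq_iterate] at this
      exact this.differentiableAt
    have h2 := h1.hasDerivAt.real_of_complex
    rw [← iteratedDeriv_succ] at h2
    refine h2.congr_of_eventuallyEq ?_
    have : ∀ᶠ y : ℝ in 𝓝 x, (y : ℂ) ∈ U :=
      Complex.continuous_ofReal.continuousAt.eventually (hU.mem_nhds hx)
    filter_upwards [this] with y hy using ih y hy
  have key2 : ∀ x : ℝ, (x : ℂ) ∈ U → iteratedDeriv n f x = (iteratedDeriv n F x).re := by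
    induction n with
    | zero => intro x hx; simpa using hf x hx
    | succ n ih =>
      intro x hx
      have := key n ih x hx
      rw [iteratedDeriv_succ, this.deriv]
  exact fun x hx => ⟨key2 x hx, (key n key2 x hx).differentiableAt⟩

lemma aux_cauchy {U : Set ℂ} (hU : IsOpen U) {F : ℂ → ℂ} (hF : DifferentiableOn ℂ F U)
    {f : ℝ → ℝ} (hf : ∀ x : ℝ, (x : ℂ) ∈ U → f x = (F x).re) {K r : ℝ} (hr : 0 < r) {x : ℝ}
    (hx : Metric.closedBall (x : ℂ) r ⊆ U) (hK : ∀ z ∈ U, ‖F z‖ ≤ K) (n : ℕ) :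
    |iteratedDeriv n f x| ≤ n.factorial * K / r ^ n := by
  have hxU : (x : ℂ) ∈ U := hx (Metric.mem_closedBall_self hr.le)
  rw [(aux_real_deriv hU hF hf n x hxU).1]
  refine (Complex.abs_re_le_norm _).trans ?_
  refine Complex.norm_iteratedDeriv_le_of_forall_mem_sphere_norm_le n hr ?_ ?_
  · apply DifferentiableOn.diffContOnCl
    rw [closure_ball _ hr.ne']
    exact hF.mono hx
  · intro z hz
    exact hK z (hx (Metric.sphere_subset_closedBall hz))

/-- local Gevrey regularity -/
def LocG (s : ℝ) (f : ℝ → ℝ) (x₀ : ℝ) : Prop :=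
  (∀ p : ℕ, DifferentiableAt ℝ (iteratedDeriv p f) x₀) ∧
  ∃ ε C R : ℝ, 0 < ε ∧ 0 < C ∧ 0 < R ∧ ∀ x ∈ Metric.ball x₀ ε, ∀ p : ℕ,
    |iteratedDeriv p f x| ≤ C * (p.factorial : ℝ) ^ s / R ^ p

lemma fact_le_rpow {s : ℝ} (hs : 1 ≤ s) (p : ℕ) : (p.factorial : ℝ) ≤ (p.factorial : ℝ) ^ s := by
  have : (1:ℝ) ≤ p.factorial := by exact_mod_cast Nat.factorial_pos p
  exact Real.self_le_rpow_of_one_le this hs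

lemma LocG.of_analytic {s : ℝ} (hs : 1 ≤ s) {f : ℝ → ℝ} {x₀ : ℝ} {F : ℂ → ℂ}
    (hF : AnalyticAt ℂ F x₀) (hf : ∀ᶠ x : ℝ in 𝓝 x₀, f x = (F x).re) : LocG s f x₀ := by
  obtain ⟨δ, hδ, hfδ⟩ := Metric.eventually_nhds_iff.1 hf
  have h1 : ∀ᶠ z in 𝓝 (x₀ : ℂ), ‖F z‖ < ‖F x₀‖ + 1 :=
    hF.continuousAt.norm.eventually_lt continuousAt_const (by simp)
  obtain ⟨η, hη, hFη⟩ := Metric.eventually_nhds_iff.1 (hF.eventually_analyticAt.and h1)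
  set ε := min δ η with hε
  have hεp : 0 < ε := lt_min hδ hη
  have hU : IsOpen (Metric.ball (x₀ : ℂ) ε) := Metric.isOpen_ball
  have hD : DifferentiableOn ℂ F (Metric.ball (x₀ : ℂ) ε) := fun z hz =>
    (hFη (lt_of_lt_of_le (Metric.mem_ball.1 hz) (min_le_right _ _))).1.differentiableAt.differentiableWithinAt
  have hfU : ∀ x : ℝ, (x : ℂ) ∈ Metric.ball (x₀ : ℂ) ε → f x = (F x).re := by
    intro x hx
    apply hfδ
    have : dist (x:ℂ) x₀ < ε := hx
    rw [Complex.dist_of_im_eq (by simp)] at this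
    simpa using lt_of_lt_of_le this (min_le_left _ _)
  have hK : ∀ z ∈ Metric.ball (x₀ : ℂ) ε, ‖F z‖ ≤ ‖F x₀‖ + 1 := fun z hz =>
    (hFη (lt_of_lt_of_le (Metric.mem_ball.1 hz) (min_le_right _ _))).2.le
  refine ⟨fun p => (aux_real_deriv hU hD hfU p x₀ (Metric.mem_ball_self hεp)).2,
    ε/2, ‖F x₀‖ + 1, ε/4, by positivity, by positivity, by positivity, ?_⟩
  intro x hx p
  have hsub : Metric.closedBall (x : ℂ) (ε/4) ⊆ Metric.ball (x₀ : ℂ) ε := by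
    intro z hz
    have h2 : dist (x:ℂ) x₀ < ε/2 := by
      rw [Complex.dist_of_im_eq (by simp)]; simpa using hx
    have h3 := Metric.mem_closedBall.1 hz
    have := dist_triangle z (x:ℂ) x₀
    exact Metric.mem_ball.2 (by linarith)
  refine (aux_cauchy hU hD hfU (by positivity : 0 < ε/4) hsub hK p).trans ?_
  have := fact_le_rpow hs p
  rw [mul_comm]
  gcongr

lemma key_ineq {s m x : ℝ} (hs : 1 < s) (hm : 0 < m) (hx : 0 < x) (n : ℕ) :
    Real.exp (-(m * x ^ (-(s-1)⁻¹))) ≤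
      (n.factorial : ℝ) ^ (s - 1) * (((s-1)/m)^(s-1)) ^ n * x ^ n := by
  have ht : 0 < s - 1 := by linarith
  set t := s - 1 with htdef
  have hu : 0 < x ^ (-t⁻¹) := Real.rpow_pos_of_pos hx _
  have hf : (0:ℝ) < n.factorial := by exact_mod_cast Nat.factorial_pos n
  set v := m / t * x ^ (-t⁻¹) with hv
  have hvp : 0 < v := by positivity
  have h1 := Real.pow_div_factorial_le_exp v hvp.le n
  rw [div_le_iff₀ hf] at h1
  have h2 := Real.rpow_le_rpow (by positivity) h1 ht.le
  rw [Real.mul_rpow (Real.exp_pos _).le hf.le, ← Real.exp_mul, ← Real.rpow_natCast, ← Real.rpow_mul hvp.le,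
    mul_comm (n:ℝ), Real.rpow_mul hvp.le, Real.rpow_natCast] at h2
  have h3 : v * t = m * x ^ (-t⁻¹) := by rw [hv]; field_simp
  have h4 : v ^ t = ((t/m)^t)⁻¹ * x⁻¹ := by
    rw [hv, Real.mul_rpow (by positivity) hu.le, ← Real.rpow_mul hx.le, ← Real.inv_rpow (by positivity), inv_div]
    have : -t⁻¹ * t = -1 := by field_simp
    rw [this, Real.rpow_neg_one]
  rw [h3, h4] at h2
  have hD : 0 < (t/m)^t := by positivity
  set D := (t/m)^t
  rw [Real.exp_neg, inv_le_iff_one_le_mul₀ (Real.exp_pos _)]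
  have h5 : (D⁻¹ * x⁻¹)^n * (D^n * x^n) = 1 := by
    rw [← mul_pow, ← mul_pow]
    have : D⁻¹ * x⁻¹ * (D * x) = 1 := by field_simp
    rw [this, one_pow]
  calc (1:ℝ) = (D⁻¹ * x⁻¹)^n * (D^n * x^n) := h5.symm
    _ ≤ (Real.exp (m * x ^ (-t⁻¹)) * (n.factorial : ℝ)^t) * (D^n * x^n) := by gcongr
    _ = _ := by ring

lemma flat_deriv {f : ℝ → ℝ} {ε : ℝ} (hε : 0 < ε) (hf : ∀ x ≤ 0, f x = 0)
    (hb : ∀ p : ℕ, ∃ C : ℝ, ∀ x, 0 < x → x < ε → |iteratedDeriv p f x| ≤ C * x ^ 2) (p : ℕ) :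
    (∀ x ≤ 0, iteratedDeriv p f x = 0) ∧ HasDerivAt (iteratedDeriv p f) 0 0 := by
  have hneg : ∀ p : ℕ, ∀ x < 0, iteratedDeriv p f x = 0 := by
    intro p x hx
    have : f =ᶠ[𝓝 x] fun _ => 0 := by
      filter_upwards [Iio_mem_nhds hx] with y hy using hf y (le_of_lt hy)
    rw [(this.iteratedDeriv p).eq_of_nhds]
    simp
  have hd : ∀ p : ℕ, iteratedDeriv p f 0 = 0 → HasDerivAt (iteratedDeriv p f) 0 0 := by
    intro p h0
    obtain ⟨C, hC⟩ := hb p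
    rw [hasDerivAt_iff_isLittleO_nhds_zero]
    simp only [zero_add, h0, sub_zero, smul_zero]
    have hO : (fun h => iteratedDeriv p f h) =O[𝓝 0] fun h : ℝ => h ^ 2 := by
      apply Asymptotics.IsBigO.of_bound |C|
      filter_upwards [Iio_mem_nhds hε] with y hy
      rcases lt_trichotomy y 0 with h | h | h
      · rw [hneg p y h, norm_zero]; positivity
      · rw [h, h0, norm_zero]; positivity
      · have := hC y h hy
        rw [Real.norm_eq_abs, Real.norm_eq_abs, abs_of_nonneg (sq_nonneg y)]
        refine this.trans ?_
        gcongr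
        exact le_abs_self C
    refine hO.trans_isLittleO ?_
    simpa using Asymptotics.isLittleO_pow_id (𝕜 := ℝ) (n := 2) (by norm_num)
  have h0 : iteratedDeriv p f 0 = 0 := by
    induction p with
    | zero => simpa using hf 0 le_rfl
    | succ n ih => rw [iteratedDeriv_succ, (hd n ih).deriv]
  refine ⟨fun x hx => ?_, hd p h0⟩
  rcases hx.lt_or_eq with h | h
  · exact hneg p x h
  · rw [h, h0]

/-- complex extension -/
noncomputable def PsiC (σ M : ℝ) (z : ℂ) : ℂ :=
  (1 + Complex.exp (M * z ^ (-(σ:ℂ)) - M * (1 - z) ^ (-(σ:ℂ))))⁻¹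

lemma psi_left {s M x : ℝ} (hx : x ≤ 0) : phiStep s M (1 - x) = 0 := by
  unfold phiStep
  rw [if_neg (by linarith), if_pos (by linarith)]

lemma psi_right {s M x : ℝ} (hx : 1 ≤ x) : phiStep s M (1 - x) = 1 := by
  unfold phiStep
  rw [if_pos (by linarith)]

lemma psi_refl (s M x : ℝ) : phiStep s M x = 1 - phiStep s M (1 - x) := by
  rcases le_or_gt x 0 with h | h
  · rw [psi_left h]; unfold phiStep; simp [h]
  rcases le_or_gt 1 x with h' | h'
  · rw [psi_right h']; unfold phiStep; simp [h', not_le.2 h]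
  unfold phiStep
  rw [if_neg (by linarith), if_neg (by linarith), if_neg (by linarith), if_neg (by linarith), sub_sub_cancel]
  have h1 := Real.exp_pos (-M / x ^ (s - 1)⁻¹)
  have h2 := Real.exp_pos (-M / (1-x) ^ (s - 1)⁻¹)
  field_simp
  ring

lemma psi_real {s M x : ℝ} (h0 : 0 < x) (h1 : x < 1) :
    PsiC ((s-1)⁻¹) M x = ((1 + Real.exp (M * x ^ (-(s-1)⁻¹) - M * (1-x) ^ (-(s-1)⁻¹)))⁻¹ : ℝ) := by
  unfold PsiC
  have e1 : (x:ℂ) ^ (-(((s-1)⁻¹ : ℝ):ℂ)) = ((x ^ (-(s-1)⁻¹) : ℝ) : ℂ) := by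
    rw [Complex.ofReal_cpow h0.le]; push_cast; rfl
  have e2 : (1 - (x:ℂ)) ^ (-(((s-1)⁻¹ : ℝ):ℂ)) = (((1-x) ^ (-(s-1)⁻¹) : ℝ) : ℂ) := by
    rw [Complex.ofReal_cpow (by linarith)]; push_cast; rfl
  rw [e1, e2]
  push_cast
  rfl

lemma psi_mid {s M x : ℝ} (h0 : 0 < x) (h1 : x < 1) :
    phiStep s M (1 - x) = (PsiC ((s-1)⁻¹) M x).re := by
  rw [psi_real h0 h1, Complex.ofReal_re]
  unfold phiStep
  rw [if_neg (by linarith), if_neg (by linarith), sub_sub_cancel, Real.rpow_neg h0.le, Real.rpow_neg (by linarith),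
    Real.exp_sub, neg_div, neg_div, Real.exp_neg, Real.exp_neg, div_eq_mul_inv M, div_eq_mul_inv M]
  have h1 := Real.exp_pos (M * (x ^ (s - 1)⁻¹)⁻¹)
  have h2 := Real.exp_pos (M * ((1-x) ^ (s - 1)⁻¹)⁻¹)
  field_simp
  try ring

lemma psiC_analyticAt {σ M : ℝ} {z : ℂ} (h0 : z ∈ Complex.slitPlane) (h1 : 1 - z ∈ Complex.slitPlane)
    (h2 : 1 + Complex.exp (M * z ^ (-(σ:ℂ)) - M * (1 - z) ^ (-(σ:ℂ))) ≠ 0) :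
    AnalyticAt ℂ (PsiC σ M) z := by
  unfold PsiC
  have a1 : AnalyticAt ℂ (fun z : ℂ => z ^ (-(σ:ℂ))) z := analyticAt_id.cpow analyticAt_const h0
  have a2 : AnalyticAt ℂ (fun z : ℂ => (1 - z) ^ (-(σ:ℂ))) z :=
    (analyticAt_const.sub analyticAt_id).cpow analyticAt_const h1
  exact (analyticAt_const.add ((analyticAt_const.mul a1).sub (analyticAt_const.mul a2)).cexp).inv h2

lemma psi_loc_ne {s M : ℝ} (hs : 1 < s) {x : ℝ} (h0 : x ≠ 0) (h1 : x ≠ 1) :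
    LocG s (fun x => phiStep s M (1 - x)) x := by
  rcases lt_or_gt_of_ne h0 with h | h
  · refine LocG.of_analytic hs.le (F := fun _ => 0) analyticAt_const ?_
    filter_upwards [Iio_mem_nhds h] with y hy
    rw [psi_left (le_of_lt hy)]; simp
  rcases lt_or_gt_of_ne h1 with h' | h'
  · refine LocG.of_analytic hs.le (F := PsiC ((s-1)⁻¹) M) ?_ ?_
    · apply psiC_analyticAt
      · simp [h]
      · rw [← Complex.ofReal_one, ← Complex.ofReal_sub]; simp only [Complex.ofReal_mem_slitPlane]; linarith
      · intro h3
        have h4 := psi_real (s := s) (M := M) h h'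
        unfold PsiC at h4
        rw [h3, inv_zero] at h4
        have h5 : (0:ℝ) < (1 + Real.exp (M * x ^ (-(s-1)⁻¹) - M * (1-x) ^ (-(s-1)⁻¹)))⁻¹ := by positivity
        have h6 := Complex.ofReal_eq_zero.1 h4.symm
        linarith
    · filter_upwards [Ioo_mem_nhds h h'] with y hy using psi_mid hy.1 hy.2
  · refine LocG.of_analytic hs.le (F := fun _ => 1) analyticAt_const ?_
    filter_upwards [Ioi_mem_nhds h'] with y hy
    rw [psi_right (le_of_lt hy)]; simp

lemma psi_bound {s M : ℝ} (hs : 1 < s) (hM : 0 < M) :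
    ∃ ε c K m : ℝ, 0 < ε ∧ 0 < c ∧ 0 < K ∧ 0 < m ∧ ∀ x, 0 < x → x < ε → ∀ p : ℕ,
      |iteratedDeriv p (fun x => phiStep s M (1 - x)) x| ≤
        p.factorial * (K * Real.exp (-(m * x ^ (-(s-1)⁻¹)))) / (c * x) ^ p := by
  set σ := (s-1)⁻¹ with hσ
  have hσp : 0 < σ := inv_pos.2 (by linarith)
  -- near 1
  have c1 : ContinuousAt (fun w : ℂ => w ^ (-(σ:ℂ))) 1 :=
    continuousAt_id.cpow continuousAt_const (by simp)
  have e1 : ∀ᶠ w in 𝓝 (1:ℂ), (1/2 : ℝ) < (w ^ (-(σ:ℂ))).re :=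
    (continuousAt_const).eventually_lt (Complex.continuous_re.continuousAt.comp c1) (by simp; norm_num)
  have e2 : ∀ᶠ w in 𝓝 (1:ℂ), (w ^ (-(σ:ℂ))).re < 2 :=
    (Complex.continuous_re.continuousAt.comp c1).eventually_lt continuousAt_const (by simp)
  have e3 : ∀ᶠ w in 𝓝 (1:ℂ), w ∈ Complex.slitPlane :=
    Complex.isOpen_slitPlane.mem_nhds (by simp)
  obtain ⟨δ₀, hδ₀, H₀⟩ := Metric.eventually_nhds_iff.1 (e1.and (e2.and e3))
  set δ := min δ₀ (1/2) with hδd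
  have hδ : 0 < δ := lt_min hδ₀ (by norm_num)
  have hδ2 : δ ≤ 1/2 := min_le_right _ _
  have H : ∀ w : ℂ, ‖w - 1‖ < δ → (1/2 : ℝ) < (w ^ (-(σ:ℂ))).re ∧ (w ^ (-(σ:ℂ))).re < 2 ∧ w ∈ Complex.slitPlane := by
    intro w hw
    apply H₀
    rw [dist_eq_norm]
    exact lt_of_lt_of_le hw (min_le_left _ _)
  have e4 : ∀ᶠ x in 𝓝[>] (0:ℝ), (Real.log 2 + 2 * M) / (M/2) ≤ x ^ (-σ) :=
    (tendsto_rpow_neg_nhdsGT_zero (by linarith)).eventually_ge_atTop _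
  obtain ⟨ε₁, hε₁, H1⟩ := mem_nhdsGT_iff_exists_Ioo_subset.1 e4
  have hε₁ : 0 < ε₁ := hε₁
  refine ⟨min ε₁ (δ/2), δ/2, 2 * Real.exp (2*M), M/2, by positivity, by positivity, by positivity, by positivity, ?_⟩
  intro x hx hxε p
  have hx1 : x < ε₁ := lt_of_lt_of_le hxε (min_le_left _ _)
  have hx2 : x < δ/2 := lt_of_lt_of_le hxε (min_le_right _ _)
  have hxσ : (Real.log 2 + 2 * M) / (M/2) ≤ x ^ (-σ) := H1 ⟨hx, hx1⟩
  rw [div_le_iff₀ (by positivity)] at hxσ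
  have hδx : 0 < δ * x := by positivity
  have hδx2 : δ * x ≤ x / 2 := by nlinarith
  -- estimates on the ball
  have HB : ∀ z ∈ Metric.ball (x:ℂ) (δ * x), AnalyticAt ℂ (PsiC σ M) z ∧
      ‖PsiC σ M z‖ ≤ 2 * Real.exp (2*M) * Real.exp (-(M/2 * x ^ (-σ))) := by
    intro z hz
    rw [Metric.mem_ball, dist_eq_norm] at hz
    have hxc : (x:ℂ) ≠ 0 := by exact_mod_cast hx.ne'
    set w : ℂ := z / x with hw
    have hzw : z = x * w := by rw [hw]; field_simp
    have hw1 : ‖w - 1‖ < δ := by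
      have : w - 1 = (z - x) / x := by rw [hw]; field_simp
      rw [this, norm_div, Complex.norm_real, Real.norm_of_nonneg hx.le, div_lt_iff₀ hx]
      exact hz
    obtain ⟨A1, A2, A3⟩ := H w hw1
    have hz1 : ‖(1 - z) - 1‖ < δ := by
      have : (1 - z) - 1 = -((z - x) + x) := by ring
      rw [this, norm_neg]
      refine (norm_add_le _ _).trans_lt ?_
      rw [Complex.norm_real, Real.norm_of_nonneg hx.le]
      linarith
    obtain ⟨B1, B2, B3⟩ := H _ hz1
    have hw0 : w ≠ 0 := Complex.slitPlane_ne_zero A3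
    have hzs : z ∈ Complex.slitPlane := by
      rw [Complex.mem_slitPlane_iff] at A3 ⊢
      rw [hzw]
      simp only [Complex.re_ofReal_mul, Complex.im_ofReal_mul]
      rcases A3 with h | h
      · left; positivity
      · right; exact mul_ne_zero hx.ne' h
    have hpow : z ^ (-(σ:ℂ)) = ((x ^ (-σ) : ℝ) : ℂ) * w ^ (-(σ:ℂ)) := by
      rw [Complex.ofReal_cpow hx.le, hzw, Complex.cpow_def_of_ne_zero (mul_ne_zero hxc hw0),
        Complex.log_ofReal_mul hx hw0, Complex.cpow_def_of_ne_zero hxc, Complex.cpow_def_of_ne_zero hw0,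
        ← Complex.exp_add, Complex.ofReal_log hx.le]
      push_cast
      congr 1
      ring
    set E : ℂ := M * z ^ (-(σ:ℂ)) - M * (1 - z) ^ (-(σ:ℂ)) with hE
    have hxp : 0 < x ^ (-σ) := Real.rpow_pos_of_pos hx _
    have hre : M/2 * x ^ (-σ) - 2 * M ≤ E.re := by
      rw [hE, hpow]
      simp only [Complex.sub_re, Complex.re_ofReal_mul]
      have t1 : M * (x^(-σ) * (1/2)) ≤ M * (x^(-σ) * (w ^ (-(σ:ℂ))).re) := by gcongr
      have t2 : M * ((1-z) ^ (-(σ:ℂ))).re ≤ M * 2 := by gcongr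
      linarith
    have hn : Real.exp (M/2 * x ^ (-σ) - 2 * M) ≤ ‖Complex.exp E‖ := by
      rw [Complex.norm_exp]; exact Real.exp_le_exp.2 hre
    have hn2 : 2 ≤ Real.exp (M/2 * x ^ (-σ) - 2 * M) := by
      rw [← Real.exp_log (by norm_num : (0:ℝ) < 2)]
      apply Real.exp_le_exp.2
      rw [Real.exp_log (by norm_num : (0:ℝ) < 2)]
      linarith
    have hlow : Real.exp (M/2 * x ^ (-σ) - 2 * M) / 2 ≤ ‖1 + Complex.exp E‖ := by
      have h7 : ‖Complex.exp E‖ ≤ ‖1 + Complex.exp E‖ + 1 := by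
        calc ‖Complex.exp E‖ = ‖(1 + Complex.exp E) - 1‖ := by congr 1; ring
          _ ≤ ‖1 + Complex.exp E‖ + ‖(1:ℂ)‖ := norm_sub_le _ _
          _ = _ := by simp
      linarith
    constructor
    · apply psiC_analyticAt hzs B3
      rw [← hE]
      intro h8
      rw [h8, norm_zero] at hlow
      linarith
    · unfold PsiC
      rw [← hE, norm_inv]
      calc ‖1 + Complex.exp E‖⁻¹ ≤ (Real.exp (M/2 * x ^ (-σ) - 2 * M) / 2)⁻¹ := by
            apply inv_anti₀ (by positivity) hlow
        _ = _ := by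
            rw [sub_eq_add_neg, Real.exp_add, Real.exp_neg, Real.exp_neg]
            field_simp
  have hsub : Metric.closedBall (x:ℂ) (δ/2 * x) ⊆ Metric.ball (x:ℂ) (δ * x) :=
    Metric.closedBall_subset_ball (by linarith)
  refine aux_cauchy Metric.isOpen_ball
    (fun z hz => (HB z hz).1.differentiableAt.differentiableWithinAt) ?_ (by positivity) hsub
    (fun z hz => (HB z hz).2) p
  intro y hy
  rw [Metric.mem_ball, Complex.dist_of_im_eq (by simp)] at hy
  simp only [Complex.ofReal_re, Real.dist_eq, abs_lt] at hy
  exact psi_mid (by linarith) (by linarith)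

lemma psi_loc_zero {s M : ℝ} (hs : 1 < s) (hM : 0 < M) :
    LocG s (fun x => phiStep s M (1 - x)) 0 ∧
    ∀ p, iteratedDeriv p (fun x => phiStep s M (1 - x)) 0 = 0 := by
  obtain ⟨ε, c, K, m, hε, hc, hK, hm, hb⟩ := psi_bound hs hM
  set f := fun x => phiStep s M (1 - x) with hfd
  set D := ((s-1)/m)^(s-1) with hD
  have hDp : 0 < D := Real.rpow_pos_of_pos (div_pos (by linarith) hm) _
  have hflat := flat_deriv (f := f) hε (fun x hx => psi_left hx) (by
    intro p
    refine ⟨p.factorial * (K * (((p+2).factorial : ℝ) ^ (s - 1) * D ^ (p+2))) / c ^ p, ?_⟩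
    intro x hx hxε
    refine (hb x hx hxε p).trans ?_
    have := key_ineq hs hm hx (p+2)
    rw [← hD] at this
    calc _ ≤ p.factorial * (K * (((p+2).factorial : ℝ) ^ (s - 1) * D ^ (p+2) * x^(p+2))) / (c * x) ^ p := by
            gcongr
      _ = _ := by
            rw [mul_pow]; field_simp; ring)
  refine ⟨⟨fun p => (hflat p).2.differentiableAt, ε, K, c / D, hε, hK, by positivity, ?_⟩,
    fun p => (hflat p).1 0 le_rfl⟩
  intro x hx p
  rcases le_or_gt x 0 with h | h
  · rw [(hflat p).1 x h, abs_zero]; positivity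
  · rw [Metric.mem_ball, Real.dist_eq, sub_zero, abs_of_pos h] at hx
    refine (hb x h hx p).trans ?_
    have := key_ineq hs hm h p
    rw [← hD] at this
    have hfp : (0:ℝ) < p.factorial := by exact_mod_cast Nat.factorial_pos p
    calc _ ≤ p.factorial * (K * ((p.factorial : ℝ) ^ (s - 1) * D ^ p * x^p)) / (c * x) ^ p := by
            gcongr
      _ = K * ((p.factorial : ℝ) ^ (s-1) * (p.factorial : ℝ)) / (c/D) ^ p := by
            rw [mul_pow, div_pow]; field_simp
      _ = _ := by
            rw [← Real.rpow_add_one hfp.ne', sub_add_cancel]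

lemma LocG.one_sub {s : ℝ} (hs : 1 ≤ s) {f : ℝ → ℝ} {x : ℝ} (h : LocG s f x) :
    LocG s (fun y => 1 - f y) x := by
  obtain ⟨hd, ε, C, R, hε, hC, hR, hb⟩ := h
  have e : ∀ p : ℕ, 0 < p → iteratedDeriv p (fun y => 1 - f y) = fun y => - iteratedDeriv p f y := by
    intro p hp; funext y
    rw [iteratedDeriv_const_sub hp]
    exact iteratedDeriv_fun_neg p f y
  refine ⟨?_, ε, C + 1, R, hε, by positivity, hR, ?_⟩
  · intro p
    rcases Nat.eq_zero_or_pos p with rfl | hp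
    · have := hd 0
      simp only [iteratedDeriv_zero] at this ⊢
      exact this.const_sub 1
    · rw [e p hp]; exact (hd p).neg
  · intro y hy p
    rcases Nat.eq_zero_or_pos p with rfl | hp
    · have := hb y hy 0
      simp only [iteratedDeriv_zero, Nat.factorial_zero, Nat.cast_one, Real.one_rpow, pow_zero, mul_one, div_one] at this ⊢
      rw [abs_le] at this ⊢
      constructor <;> linarith
    · rw [e p hp]
      simp only [abs_neg]
      refine (hb y hy p).trans ?_
      gcongr
      linarith

lemma LocG.refl {s : ℝ} {f : ℝ → ℝ} {x : ℝ} (h : LocG s f (1 - x)) :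
    LocG s (fun y => f (1 - y)) x := by
  obtain ⟨hd, ε, C, R, hε, hC, hR, hb⟩ := h
  refine ⟨?_, ε, C, R, hε, hC, hR, ?_⟩
  · intro p
    rw [iteratedDeriv_comp_const_sub]
    have : DifferentiableAt ℝ (fun t => iteratedDeriv p f (1 - t)) x :=
      (hd p).comp x (by fun_prop)
    simp only [smul_eq_mul]
    exact this.const_mul _
  · intro y hy p
    rw [iteratedDeriv_comp_const_sub]
    simp only [smul_eq_mul, abs_mul, abs_pow, abs_neg, abs_one, one_pow, one_mul]
    apply hb
    rw [Metric.mem_ball, Real.dist_eq] at hy ⊢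
    rwa [show 1 - y - (1 - x) = -(y - x) by ring, abs_neg]

lemma phi_loc {s M : ℝ} (hs : 1 < s) (hM : 0 < M) (x : ℝ) : LocG s (phiStep s M) x := by
  by_cases h1 : x = 1
  · have h := (psi_loc_zero hs hM).1
    have := LocG.refl (x := x) (f := fun x => phiStep s M (1 - x)) (s := s) (by rw [h1, sub_self]; exact h)
    simpa using this
  · have h : LocG s (fun x => phiStep s M (1 - x)) x := by
      by_cases h0 : x = 0
      · rw [h0]; exact (psi_loc_zero hs hM).1
      · exact psi_loc_ne hs h0 h1
    have := h.one_sub hs.le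
    rwa [← funext (psi_refl s M)] at this

lemma locG_compact {s : ℝ} {f : ℝ → ℝ} (h : ∀ x, LocG s f x) {S : Set ℝ} (hS : IsCompact S) :
    ∃ C R : ℝ, 0 < C ∧ 0 < R ∧ ∀ x ∈ S, ∀ p : ℕ,
      |iteratedDeriv p f x| ≤ C * (p.factorial : ℝ) ^ s / R ^ p := by
  refine hS.induction_on (p := fun S => ∃ C R : ℝ, 0 < C ∧ 0 < R ∧ ∀ x ∈ S, ∀ p : ℕ,
      |iteratedDeriv p f x| ≤ C * (p.factorial : ℝ) ^ s / R ^ p) ?_ ?_ ?_ ?_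
  · exact ⟨1, 1, one_pos, one_pos, fun x hx => hx.elim⟩
  · rintro A B hAB ⟨C, R, hC, hR, hb⟩
    exact ⟨C, R, hC, hR, fun x hx => hb x (hAB hx)⟩
  · rintro A B ⟨C, R, hC, hR, hb⟩ ⟨C', R', hC', hR', hb'⟩
    refine ⟨max C C', min R R', by positivity, by positivity, ?_⟩
    have hmin : 0 < min R R' := lt_min hR hR'
    rintro x (hx | hx) p
    · refine (hb x hx p).trans ?_
      gcongr
      · exact le_max_left _ _
      · exact min_le_left _ _
    · refine (hb' x hx p).trans ?_
      gcongr
      · exact le_max_right _ _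
      · exact min_le_right _ _
  · intro x _
    obtain ⟨_, ε, C, R, hε, hC, hR, hb⟩ := h x
    exact ⟨Metric.ball x ε, mem_nhdsWithin_of_mem_nhds (Metric.ball_mem_nhds x hε), C, R, hC, hR, hb⟩

theorem stmt12 (s M : ℝ) (hs : 1 < s) (hM : 0 < M) :
    -- φ_s is C^∞ on ℝ
    ContDiff ℝ (⊤ : ℕ∞) (phiStep s M) ∧
    -- all derivatives of φ_s vanish at 0 and at 1
    (∀ p : ℕ, 1 ≤ p → iteratedDeriv p (phiStep s M) 0 = 0 ∧
      iteratedDeriv p (phiStep s M) 1 = 0) ∧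
    -- φ_s is Gevrey of order s on every compact interval
    (∀ a b : ℝ, a ≤ b →
      ∃ C R : ℝ, 0 < C ∧ 0 < R ∧
        ∀ p : ℕ, ∀ ρ ∈ Set.Icc a b,
          |iteratedDeriv p (phiStep s M) ρ| ≤ C * (p.factorial : ℝ) ^ s / R ^ p) := by
  refine ⟨?_, ?_, ?_⟩
  · exact contDiff_of_differentiable_iteratedDeriv fun m _ x => (phi_loc hs hM x).1 m
  · intro p hp
    have h := (psi_loc_zero hs hM).2 p
    constructor
    · rw [funext (psi_refl s M), iteratedDeriv_const_sub hp]
      exact (iteratedDeriv_fun_neg p (fun x => phiStep s M (1 - x)) 0).trans (by rw [h, neg_zero])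
    · rw [iteratedDeriv_comp_const_sub] at h
      simpa using h
  · intro a b _
    obtain ⟨C, R, hC, hR, hb⟩ := locG_compact (phi_loc hs hM) (isCompact_Icc (a := a) (b := b))
    exact ⟨C, R, hC, hR, fun p ρ hρ => hb ρ hρ p⟩
end

section
/- Let σ > 0 and set s := 1 + 1/σ. Define f : ℝ → ℝ by f(ρ) := e^{−1/ρ^σ} for ρ > 0 and f(ρ) := 0 for ρ ≤ 0. Then f is of class C^∞ on ℝ and is Gevrey of order s on every compact interval of ℝ: for every compact interval [a,b] there exist constants C, R > 0 such that |f^{(p)}(ρ)| ≤ C (p!)^s / R^p for all ρ ∈ [a,b] and all integers p ≥ 0. -/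
open Real Set Filter

/-- The function `f(ρ) = e^{-1/ρ^σ}` for `ρ > 0`, extended by `0` for `ρ ≤ 0`. -/
noncomputable def gevreyBump (σ : ℝ) (ρ : ℝ) : ℝ :=
  if 0 < ρ then Real.exp (-1 / ρ ^ σ) else 0

open Topology in
lemma gb_real (σ : ℝ) (hσ : 0 < σ) (p : ℕ) (ρ : ℝ) (hρ : 0 < ρ) :
    Real.exp (-(ρ ^ (-σ) / 2)) / ρ ^ p
      ≤ (p.factorial : ℝ) ^ (1 / σ) / ((σ / 2) ^ (1 / σ)) ^ p := by
  set t := ρ ^ (-σ) / 2 with ht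
  have htp : 0 < t := by positivity
  have h1 : (σ * t) ^ p / p.factorial ≤ Real.exp (σ * t) :=
    Real.pow_div_factorial_le_exp _ (by positivity) p
  have hf : (0 : ℝ) < p.factorial := by exact_mod_cast p.factorial_pos
  have h2 : (σ / 2) ^ p * (ρ ^ (-σ)) ^ p * Real.exp (-(σ * t)) ≤ p.factorial := by
    rw [div_le_iff₀ hf] at h1
    rw [Real.exp_neg, ← div_eq_mul_inv, div_le_iff₀ (Real.exp_pos _), ← mul_pow]
    have : σ / 2 * ρ ^ (-σ) = σ * t := by rw [ht]; ring
    rw [this]; linarith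
  have h3 := Real.rpow_le_rpow (by positivity) h2 (by positivity : 0 ≤ 1 / σ)
  have e1 : ((ρ ^ (-σ)) ^ p) ^ (1 / σ) = 1 / ρ ^ p := by
    rw [← Real.rpow_natCast, ← Real.rpow_mul hρ.le, ← Real.rpow_mul hρ.le]
    have : -σ * p * (1 / σ) = -(p : ℝ) := by field_simp
    rw [this, Real.rpow_neg hρ.le, Real.rpow_natCast, one_div]
  have e2 : ((σ / 2) ^ p) ^ (1 / σ) = ((σ / 2) ^ (1 / σ)) ^ p := by
    rw [← Real.rpow_natCast, ← Real.rpow_natCast, ← Real.rpow_mul (by positivity),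
      ← Real.rpow_mul (by positivity), mul_comm]
  have e3 : (Real.exp (-(σ * t))) ^ (1 / σ) = Real.exp (-t) := by
    rw [← Real.exp_mul]; congr 1; field_simp
  rw [Real.mul_rpow (by positivity) (by positivity), Real.mul_rpow (by positivity) (by positivity),
    e1, e2, e3] at h3
  rw [le_div_iff₀ (by positivity)]
  calc _ = _ := by ring
    _ ≤ _ := h3

noncomputable def gbF (σ : ℝ) (z : ℂ) : ℂ := Complex.exp (-(z ^ (-σ : ℂ)))

lemma gbF_analytic (σ : ℝ) : AnalyticOnNhd ℂ (gbF σ) Complex.slitPlane := by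
  apply DifferentiableOn.analyticOnNhd _ Complex.isOpen_slitPlane
  intro z hz
  apply DifferentiableAt.differentiableWithinAt
  unfold gbF
  exact ((differentiableAt_id.cpow_const hz).neg).cexp

open Topology in
lemma gb_theta (σ : ℝ) : ∃ θ : ℝ, 0 < θ ∧ θ < 1 ∧
    ∀ w : ℂ, ‖w - 1‖ ≤ θ → 1 / 2 ≤ (w ^ (-σ : ℂ)).re := by
  have hc : ContinuousAt (fun w : ℂ => (w ^ (-σ : ℂ)).re) 1 := by
    apply Complex.continuous_re.continuousAt.comp
    exact (continuousAt_id.cpow continuousAt_const (by simp))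
  have := hc.eventually (lt_mem_nhds (by simp; norm_num : (1 / 2 : ℝ) < ((1 : ℂ) ^ (-σ : ℂ)).re))
  obtain ⟨ε, hε, h⟩ := Metric.eventually_nhds_iff.1 this
  refine ⟨min (ε / 2) (1 / 2), by positivity, by
    have := min_le_right (ε / 2) (1 / 2 : ℝ); linarith, fun w hw => le_of_lt (h ?_)⟩
  rw [dist_eq_norm]
  have := min_le_left (ε / 2) (1 / 2 : ℝ)
  linarith

lemma gb_ball {θ ρ : ℝ} (hθ : θ < 1) (hρ : 0 < ρ) {z : ℂ}
    (hz : z ∈ Metric.closedBall (ρ : ℂ) (θ * ρ)) : z ∈ Complex.slitPlane := by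
  left
  rw [Metric.mem_closedBall, dist_eq_norm] at hz
  have h := (Complex.abs_re_le_norm (z - ρ)).trans hz
  rw [Complex.sub_re, Complex.ofReal_re] at h
  have := (abs_le.1 h).1
  nlinarith

lemma gbF_bound (σ θ : ℝ) (h0 : 0 < θ) (h1 : θ < 1)
    (h : ∀ w : ℂ, ‖w - 1‖ ≤ θ → 1 / 2 ≤ (w ^ (-σ : ℂ)).re) (p : ℕ) (ρ : ℝ) (hρ : 0 < ρ) :
    ‖iteratedDeriv p (gbF σ) ρ‖ ≤ p.factorial * Real.exp (-(ρ ^ (-σ) / 2)) / (θ * ρ) ^ p := by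
  apply Complex.norm_iteratedDeriv_le_of_forall_mem_sphere_norm_le p (by positivity)
  · apply DifferentiableOn.diffContOnCl
    rw [closure_ball _ (by positivity)]
    exact (gbF_analytic σ).differentiableOn.mono fun z hz => gb_ball h1 hρ hz
  · intro z hz
    have hz' := Metric.sphere_subset_closedBall hz
    rw [gbF, Complex.norm_exp, Real.exp_le_exp, Complex.neg_re, neg_le_neg_iff]
    have hne : (ρ : ℂ) ≠ 0 := by exact_mod_cast hρ.ne'
    have hw : ‖z / ρ - 1‖ ≤ θ := by
      rw [div_sub_one hne, norm_div, Complex.norm_real, Real.norm_of_nonneg hρ.le,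
        div_le_iff₀ hρ, ← dist_eq_norm]
      exact hz'
    have hzw : z = (ρ : ℂ) * (z / ρ) := by field_simp
    have hz0 : z ≠ 0 := Complex.slitPlane_ne_zero (gb_ball h1 hρ hz')
    have key : z ^ (-σ : ℂ) = ((ρ ^ (-σ) : ℝ) : ℂ) * (z / ρ) ^ (-σ : ℂ) := by
      rw [Complex.ofReal_cpow hρ.le, Complex.ofReal_neg]
      conv_lhs => rw [hzw]
      have hd : z / ρ ≠ 0 := div_ne_zero hz0 hne
      rw [Complex.cpow_def_of_ne_zero (mul_ne_zero hne hd), Complex.cpow_def_of_ne_zero hne,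
        Complex.cpow_def_of_ne_zero hd, Complex.log_ofReal_mul hρ hd, ← Complex.exp_add,
        Complex.ofReal_log hρ.le]
      ring_nf
    rw [key, Complex.re_ofReal_mul]
    have := h _ hw
    have hp : 0 < ρ ^ (-σ) := by positivity
    nlinarith

noncomputable def gbG (σ : ℝ) (p : ℕ) (ρ : ℝ) : ℝ :=
  if 0 < ρ then (iteratedDeriv p (gbF σ) (ρ : ℂ)).re else 0

lemma gbG_bound0 (σ θ : ℝ) (h0 : 0 < θ) (h1 : θ < 1)
    (h : ∀ w : ℂ, ‖w - 1‖ ≤ θ → 1 / 2 ≤ (w ^ (-σ : ℂ)).re) (p : ℕ) (ρ : ℝ) (hρ : 0 < ρ) :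
    |gbG σ p ρ| ≤ p.factorial * (Real.exp (-(ρ ^ (-σ) / 2)) / ρ ^ p) / θ ^ p := by
  rw [gbG, if_pos hρ]
  refine (Complex.abs_re_le_norm _).trans ((gbF_bound σ θ h0 h1 h p ρ hρ).trans (le_of_eq ?_))
  rw [mul_pow]; field_simp

open Topology in
lemma gbG_deriv (σ : ℝ) (hσ : 0 < σ) (p : ℕ) (ρ : ℝ) :
    HasDerivAt (gbG σ p) (gbG σ (p + 1) ρ) ρ := by
  obtain ⟨θ, h0, h1, h⟩ := gb_theta σ
  rcases lt_trichotomy ρ 0 with hρ | rfl | hρ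
  · rw [gbG, if_neg hρ.le.not_gt]
    apply (hasDerivAt_const ρ (0 : ℝ)).congr_of_eventuallyEq
    filter_upwards [gt_mem_nhds hρ] with x hx
    rw [gbG, if_neg (not_lt.2 (le_of_lt hx))]
  · rw [gbG, if_neg (lt_irrefl _)]
    set K := p.factorial * (((p + 2).factorial : ℝ) ^ (1 / σ) /
      ((σ / 2) ^ (1 / σ)) ^ (p + 2)) / θ ^ p with hK
    have hK0 : 0 ≤ K := by positivity
    have hb : ∀ x : ℝ, |gbG σ p x| ≤ K * x ^ 2 := by
      intro x
      by_cases hx : 0 < x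
      · refine (gbG_bound0 σ θ h0 h1 h p x hx).trans ?_
        have hr := gb_real σ hσ (p + 2) x hx
        have : Real.exp (-(x ^ (-σ) / 2)) / x ^ p
            ≤ (((p + 2).factorial : ℝ) ^ (1 / σ) / ((σ / 2) ^ (1 / σ)) ^ (p + 2)) * x ^ 2 := by
          calc _ = Real.exp (-(x ^ (-σ) / 2)) / x ^ (p + 2) * x ^ 2 := by
                rw [pow_add]; field_simp
            _ ≤ _ := by gcongr
        calc _ ≤ p.factorial * ((((p + 2).factorial : ℝ) ^ (1 / σ) /
              ((σ / 2) ^ (1 / σ)) ^ (p + 2)) * x ^ 2) / θ ^ p := by gcongr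
          _ = _ := by rw [hK]; ring
      · rw [gbG, if_neg hx, abs_zero]; positivity
    have hO : (gbG σ p) =O[𝓝 0] fun x : ℝ => ‖x - 0‖ ^ 2 := by
      apply Asymptotics.IsBigO.of_bound K
      filter_upwards with x
      rw [sub_zero, norm_pow, norm_norm, Real.norm_eq_abs, Real.norm_eq_abs, sq_abs]
      exact hb x
    have := hO.hasFDerivAt (𝕜 := ℝ) (by norm_num : 1 < 2)
    simpa using this.hasDerivAt
  · have hs : (ρ : ℂ) ∈ Complex.slitPlane := by left; simpa using hρ
    have ha : AnalyticAt ℂ (iteratedDeriv p (gbF σ)) ρ := by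
      have := (gbF_analytic σ).iterated_deriv p _ hs
      rwa [← iteratedDeriv_eq_iterate] at this
    have hd := ha.differentiableAt.hasDerivAt.real_of_complex
    rw [← iteratedDeriv_succ] at hd
    rw [gbG, if_pos hρ]
    apply hd.congr_of_eventuallyEq
    filter_upwards [lt_mem_nhds hρ] with x hx
    rw [gbG, if_pos hx]

lemma gb_iter (σ : ℝ) (hσ : 0 < σ) (p : ℕ) : iteratedDeriv p (gevreyBump σ) = gbG σ p := by
  induction p with
  | zero =>
    ext x
    rw [iteratedDeriv_zero, gevreyBump, gbG]
    split_ifs with hx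
    · have : gbF σ (x : ℂ) = ((Real.exp (-1 / x ^ σ) : ℝ) : ℂ) := by
        rw [gbF, ← Complex.ofReal_neg, ← Complex.ofReal_cpow hx.le, Real.rpow_neg hx.le,
          ← Complex.ofReal_neg, ← Complex.ofReal_exp]
        congr 2
        rw [neg_div, one_div]
      rw [iteratedDeriv_zero, this, Complex.ofReal_re]
    · rfl
  | succ p ih =>
    rw [iteratedDeriv_succ, ih]
    ext x
    exact (gbG_deriv σ hσ p x).deriv

theorem stmt13 (σ : ℝ) (hσ : 0 < σ) :
    -- f is C^∞ on ℝ
    ContDiff ℝ (⊤ : ℕ∞) (gevreyBump σ) ∧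
    -- f is Gevrey of order s = 1 + 1/σ on every compact interval
    (∀ a b : ℝ, a ≤ b →
      ∃ C R : ℝ, 0 < C ∧ 0 < R ∧
        ∀ p : ℕ, ∀ ρ ∈ Set.Icc a b,
          |iteratedDeriv p (gevreyBump σ) ρ|
            ≤ C * (p.factorial : ℝ) ^ (1 + 1 / σ) / R ^ p) := by
  constructor
  · apply contDiff_of_differentiable_iteratedDeriv
    intro m _
    rw [gb_iter σ hσ]
    exact fun x => (gbG_deriv σ hσ m x).differentiableAt
  · intro a b _
    obtain ⟨θ, h0, h1, h⟩ := gb_theta σ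
    refine ⟨1, θ * (σ / 2) ^ (1 / σ), one_pos, by positivity, fun p ρ _ => ?_⟩
    rw [gb_iter σ hσ]
    have hf : (0 : ℝ) < p.factorial := by exact_mod_cast p.factorial_pos
    by_cases hρ : 0 < ρ
    · refine (gbG_bound0 σ θ h0 h1 h p ρ hρ).trans ?_
      have hr := gb_real σ hσ p ρ hρ
      calc _ ≤ p.factorial * ((p.factorial : ℝ) ^ (1 / σ) / ((σ / 2) ^ (1 / σ)) ^ p) / θ ^ p := by
            gcongr
        _ = _ := by
            rw [Real.rpow_add hf, Real.rpow_one, mul_pow]; field_simp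
    · rw [gbG, if_neg hρ, abs_zero]; positivity
end

section
/- Let A > 0. There exists a constant M(A) > 0 such that for every integer k ≥ 0 and every complex number z with |z| ≤ A, |e^{−z²/2} H_k(z)| ≤ M(A) · Γ(k+1)/Γ(k/2+1) · e^{A√(2k)}, where H_k is the k-th physicists' Hermite polynomial. -/
open Complex Real

/-- The physicists' Hermite polynomials: `H₀ = 1`, `H₁(z) = 2z`,
`H_{k+1}(z) = 2z H_k(z) - 2k H_{k-1}(z)`. -/
noncomputable def hermiteP : ℕ → ℂ → ℂ
  | 0, _ => 1
  | 1, z => 2 * z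
  | (k + 2), z => 2 * z * hermiteP (k + 1) z - 2 * ((k : ℂ) + 1) * hermiteP k z

noncomputable def gH (k : ℕ) : ℝ := Real.Gamma ((k : ℝ) + 1) / Real.Gamma ((k : ℝ) / 2 + 1)

lemma gH_pos (k : ℕ) : 0 < gH k := by
  unfold gH
  exact div_pos (Real.Gamma_pos_of_pos (by positivity)) (Real.Gamma_pos_of_pos (by positivity))

lemma gH_rec (k : ℕ) : gH (k + 2) = 2 * ((k : ℝ) + 1) * gH k := by
  unfold gH
  have h1 : Real.Gamma (((k + 2 : ℕ) : ℝ) + 1)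
      = ((k : ℝ) + 2) * (((k : ℝ) + 1) * Real.Gamma ((k : ℝ) + 1)) := by
    rw [← Real.Gamma_add_one (by positivity), show (k : ℝ) + 2 = (k + 1 : ℝ) + 1 by ring,
      ← Real.Gamma_add_one (by positivity)]
    congr 1
    push_cast; ring
  have h2 : Real.Gamma (((k + 2 : ℕ) : ℝ) / 2 + 1)
      = ((k : ℝ) / 2 + 1) * Real.Gamma ((k : ℝ) / 2 + 1) := by
    rw [← Real.Gamma_add_one (by positivity)]
    congr 1
    push_cast; ring
  rw [h1, h2]
  have h3 : Real.Gamma ((k : ℝ) / 2 + 1) ≠ 0 := (Real.Gamma_pos_of_pos (by positivity)).ne'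
  field_simp

lemma Gamma_half {x : ℝ} (hx : 0 < x) :
    x * Real.Gamma (x + 1 / 2) ^ 2 ≤ Real.Gamma (x + 1) ^ 2 := by
  have h := Real.Gamma_mul_add_mul_le_rpow_Gamma_mul_rpow_Gamma (s := x) (t := x + 1)
    (a := 1 / 2) (b := 1 / 2) hx (by linarith) (by norm_num) (by norm_num) (by norm_num)
  rw [show (1 / 2 : ℝ) * x + 1 / 2 * (x + 1) = x + 1 / 2 by ring,
    ← Real.sqrt_eq_rpow, ← Real.sqrt_eq_rpow] at h
  have p0 := Real.Gamma_pos_of_pos hx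
  have p1 := Real.Gamma_pos_of_pos (show 0 < x + 1 by linarith)
  have p2 := Real.Gamma_pos_of_pos (show 0 < x + 1 / 2 by linarith)
  have h2 := pow_le_pow_left₀ p2.le h 2
  rw [mul_pow, Real.sq_sqrt p0.le, Real.sq_sqrt p1.le] at h2
  have h3 := Real.Gamma_add_one hx.ne'
  calc _ ≤ x * (Real.Gamma x * Real.Gamma (x + 1)) := by gcongr
    _ = _ := by rw [h3]; ring

lemma gH_ratio (k : ℕ) : √(2 * ((k : ℝ) + 1)) * gH (k + 1) ≤ gH (k + 2) := by
  have key : 2 * ((k : ℝ) + 1) * gH (k + 1) ^ 2 ≤ gH (k + 2) ^ 2 := by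
    rw [gH_rec]
    unfold gH
    have h1 : Real.Gamma (((k + 1 : ℕ) : ℝ) + 1) = ((k : ℝ) + 1) * Real.Gamma ((k : ℝ) + 1) := by
      rw [← Real.Gamma_add_one (by positivity)]
      push_cast; rfl
    have h2 := Gamma_half (x := ((k : ℝ) + 1) / 2) (by positivity)
    rw [show ((k : ℝ) + 1) / 2 + 1 / 2 = (k : ℝ) / 2 + 1 by ring] at h2
    rw [h1, show ((k + 1 : ℕ) : ℝ) / 2 + 1 = ((k : ℝ) + 1) / 2 + 1 by push_cast; ring]
    have p0 := Real.Gamma_pos_of_pos (show 0 < (k : ℝ) + 1 by positivity)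
    have p1 := Real.Gamma_pos_of_pos (show 0 < (k : ℝ) / 2 + 1 by positivity)
    have p2 := Real.Gamma_pos_of_pos (show 0 < ((k : ℝ) + 1) / 2 + 1 by positivity)
    generalize Real.Gamma ((k : ℝ) + 1) = a at *
    generalize Real.Gamma ((k : ℝ) / 2 + 1) = b at *
    generalize Real.Gamma (((k : ℝ) + 1) / 2 + 1) = c at *
    have hk : 0 < (k : ℝ) + 1 := by positivity
    generalize (k : ℝ) + 1 = n at *
    rw [div_pow, mul_pow, mul_pow, div_pow, ← mul_div_assoc, ← mul_div_assoc,
      div_le_div_iff₀ (by positivity) (by positivity)]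
    have := mul_le_mul_of_nonneg_left h2 (show 0 ≤ 4 * n ^ 2 * a ^ 2 by positivity)
    linarith
  have h := Real.sqrt_le_sqrt key
  rw [Real.sqrt_mul (by positivity), Real.sqrt_sq (gH_pos _).le, Real.sqrt_sq (gH_pos _).le] at h
  exact h

lemma quad_exp {a u w : ℝ} (ha : 0 ≤ a) :
    (a * u + w) ^ 2 + u ^ 2 ≤ Real.exp a * (u ^ 2 + w ^ 2) := by
  have h := Real.sum_le_exp_of_nonneg ha 4
  simp [Finset.sum_range_succ, Nat.factorial] at h
  obtain ⟨y, hy⟩ : ∃ y, y = Real.exp a - 1 - a ^ 2 / 2 := ⟨_, rfl⟩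
  have h1 : a + a ^ 3 / 6 ≤ y := by rw [hy]; linarith
  have h2 : a ^ 2 + a ^ 4 / 4 ≤ y ^ 2 := by
    have := pow_le_pow_left₀ (by positivity) h1 2
    nlinarith [pow_nonneg ha 4, pow_nonneg ha 6]
  rw [show Real.exp a = y + 1 + a ^ 2 / 2 by rw [hy]; ring]
  have hy0 : 0 ≤ y := le_trans (by positivity) h1
  rcases ha.eq_or_lt with h0 | h0
  · subst h0; nlinarith [mul_nonneg hy0 (sq_nonneg u), mul_nonneg hy0 (sq_nonneg w)]
  have hp : 0 < y + a ^ 2 / 2 := by positivity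
  -- (y - a²/2) u² - 2 a u w + (y + a²/2) w² ≥ 0
  have : 0 ≤ (y + a ^ 2 / 2) *
      ((y - a ^ 2 / 2) * u ^ 2 - 2 * a * u * w + (y + a ^ 2 / 2) * w ^ 2) := by
    have e : (y + a ^ 2 / 2) *
      ((y - a ^ 2 / 2) * u ^ 2 - 2 * a * u * w + (y + a ^ 2 / 2) * w ^ 2)
      = ((y + a ^ 2 / 2) * w - a * u) ^ 2 + (y ^ 2 - a ^ 2 - a ^ 4 / 4) * u ^ 2 := by ring
    rw [e]
    have := mul_nonneg (show 0 ≤ y ^ 2 - a ^ 2 - a ^ 4 / 4 by linarith) (sq_nonneg u)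
    positivity
  have := nonneg_of_mul_nonneg_right this hp
  nlinarith

lemma main_bound (A : ℝ) (hA : 0 < A) (z : ℂ) (hz : ‖z‖ ≤ A) (k : ℕ) :
    (‖hermiteP (k + 1) z‖ / gH (k + 1)) ^ 2 + (‖hermiteP k z‖ / gH k) ^ 2
      ≤ ((2 * A / gH 1) ^ 2 + (1 / gH 0) ^ 2) * Real.exp (2 * A * √(2 * (k : ℝ))) := by
  induction k with
  | zero =>
    simp only [hermiteP, Nat.cast_zero, mul_zero, Real.sqrt_zero, Real.exp_zero, mul_one,
      norm_mul, norm_one, zero_add, Complex.norm_ofNat]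
    have := gH_pos 1
    gcongr
  | succ k ih =>
    have hs : 0 < √(2 * ((k : ℝ) + 1)) := by positivity
    have hs2 : √(2 * ((k : ℝ) + 1)) ^ 2 = 2 * ((k : ℝ) + 1) := Real.sq_sqrt (by positivity)
    have ht2 : √(2 * (k : ℝ)) ^ 2 = 2 * (k : ℝ) := Real.sq_sqrt (by positivity)
    have hr := gH_ratio k
    have hg := gH_rec k
    have p0 := gH_pos k
    have p1 := gH_pos (k + 1)
    have p2 := gH_pos (k + 2)
    push_cast
    generalize √(2 * ((k : ℝ) + 1)) = s at *
    generalize √(2 * (k : ℝ)) = t at *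
    have hH : ‖hermiteP (k + 2) z‖ ≤ 2 * A * ‖hermiteP (k + 1) z‖
        + 2 * ((k : ℝ) + 1) * ‖hermiteP k z‖ := by
      rw [hermiteP]
      refine (norm_sub_le _ _).trans ?_
      have e : ‖(k : ℂ) + 1‖ = (k : ℝ) + 1 := by
        rw [← Nat.cast_succ, Complex.norm_natCast]; push_cast; rfl
      simp only [norm_mul, e, Complex.norm_ofNat]
      gcongr
    have hU : ‖hermiteP (k + 2) z‖ / gH (k + 2) ≤
        2 * A / s * (‖hermiteP (k + 1) z‖ / gH (k + 1)) + ‖hermiteP k z‖ / gH k := by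
      calc _ ≤ (2 * A * ‖hermiteP (k + 1) z‖
        + 2 * ((k : ℝ) + 1) * ‖hermiteP k z‖) / gH (k + 2) := by gcongr
        _ = 2 * A * ‖hermiteP (k + 1) z‖ / gH (k + 2) + ‖hermiteP k z‖ / gH k := by
          rw [add_div]; congr 1; rw [hg]; field_simp
        _ ≤ 2 * A * ‖hermiteP (k + 1) z‖ / (s * gH (k + 1)) + ‖hermiteP k z‖ / gH k := by gcongr
        _ = _ := by congr 1; field_simp
    have hU0 : 0 ≤ ‖hermiteP (k + 2) z‖ / gH (k + 2) := by positivity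
    have ha : 2 * A / s ≤ 2 * A * s - 2 * A * t := by
      rw [div_le_iff₀ hs]
      nlinarith [sq_nonneg (s - t)]
    have ha0 : 0 ≤ 2 * A / s := by positivity
    have q := quad_exp (u := ‖hermiteP (k + 1) z‖ / gH (k + 1)) (w := ‖hermiteP k z‖ / gH k) ha0
    calc _ ≤ (2 * A / s * (‖hermiteP (k + 1) z‖ / gH (k + 1)) + ‖hermiteP k z‖ / gH k) ^ 2
          + (‖hermiteP (k + 1) z‖ / gH (k + 1)) ^ 2 := by gcongr
      _ ≤ _ := q
      _ ≤ Real.exp (2 * A * s - 2 * A * t) *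
          (((2 * A / gH 1) ^ 2 + (1 / gH 0) ^ 2) * Real.exp (2 * A * t)) := by gcongr
      _ = ((2 * A / gH 1) ^ 2 + (1 / gH 0) ^ 2) *
          (Real.exp (2 * A * s - 2 * A * t) * Real.exp (2 * A * t)) := by ring
      _ = _ := by rw [← Real.exp_add]; congr 2; ring

theorem stmt16 (A : ℝ) (hA : 0 < A) :
    ∃ M : ℝ, 0 < M ∧
      ∀ (k : ℕ) (z : ℂ), ‖z‖ ≤ A →
        ‖Complex.exp (-z ^ 2 / 2) * hermiteP k z‖
          ≤ M * (Real.Gamma ((k : ℝ) + 1) / Real.Gamma ((k : ℝ) / 2 + 1)) *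
              Real.exp (A * Real.sqrt (2 * (k : ℝ))) := by
  have g0 := gH_pos 0
  have g1 := gH_pos 1
  have hC : 0 < (2 * A / gH 1) ^ 2 + (1 / gH 0) ^ 2 := by positivity
  refine ⟨Real.exp (A ^ 2 / 2) * √((2 * A / gH 1) ^ 2 + (1 / gH 0) ^ 2), by positivity, ?_⟩
  intro k z hz
  have hb := main_bound A hA z hz k
  have gk := gH_pos k
  generalize (2 * A / gH 1) ^ 2 + (1 / gH 0) ^ 2 = C at *
  have h1 : ‖Complex.exp (-z ^ 2 / 2)‖ ≤ Real.exp (A ^ 2 / 2) := by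
    refine (Complex.norm_exp_le_exp_norm _).trans ?_
    simp only [norm_div, norm_neg, norm_pow, Complex.norm_ofNat]
    gcongr
  have h2 : ‖hermiteP k z‖ / gH k ≤ √C * Real.exp (A * √(2 * (k : ℝ))) := by
    refine (pow_le_pow_iff_left₀ (by positivity) (by positivity) two_ne_zero).1 ?_
    rw [mul_pow, Real.sq_sqrt hC.le, ← Real.exp_nat_mul]
    have : ((2 : ℕ) : ℝ) * (A * √(2 * (k : ℝ))) = 2 * A * √(2 * (k : ℝ)) := by push_cast; ring
    rw [this]
    nlinarith [sq_nonneg (‖hermiteP (k + 1) z‖ / gH (k + 1))]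
  rw [div_le_iff₀ gk] at h2
  rw [norm_mul]
  change _ ≤ _ * gH k * _
  calc _ ≤ Real.exp (A ^ 2 / 2) * (√C * Real.exp (A * √(2 * (k : ℝ))) * gH k) := by gcongr
    _ = _ := by ring
end

section
/- Define E(t,x) := e^{i x²/(4t)} / √(4π i t) for real t ≠ 0 and x ∈ ℝ. Let t₁ > 0 and L > 0. Then there exist constants M > 0 and R > 0 such that for all integers k, l ≥ 0 and all (t,x) with |t| ≥ t₁ and |x| ≤ L, |∂_x^k ∂_t^l E(t,x)| ≤ M · (k!)^{1/2} / (R/√2)^k · l! / (R/2)^{2l}. -/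
open MeasureTheory Complex Real Set Filter

/-- The fundamental solution `E(t,x) = e^{i x²/(4t)} / √(4π i t)` of the 1D Schrödinger
equation, the complex square root being the principal branch. -/
noncomputable def E (t x : ℝ) : ℂ :=
  Complex.exp (Complex.I * (x : ℂ) ^ 2 / (4 * (t : ℂ))) /
    ((4 * (Real.pi : ℂ) * Complex.I * (t : ℂ)) ^ ((1 : ℂ) / 2))

/-- The odd extension of `θ₀ : (0,1) → ℂ` to `ℝ`. -/
noncomputable def thetaOdd (θ₀ : ℝ → ℂ) (x : ℝ) : ℂ :=
  if 0 < x ∧ x < 1 then θ₀ x else if -1 < x ∧ x < 0 then -θ₀ (-x) else 0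

/-- `θ⁻(t,x) = ∫_{-1}^1 E(t, x-y) θ₀^odd(y) dy`. -/
noncomputable def thetaMinus (θ₀ : ℝ → ℂ) (t x : ℝ) : ℂ :=
  ∫ y in Set.Ioo (-1 : ℝ) 1, E t (x - y) * thetaOdd θ₀ y


noncomputable def GG : ℕ → ℝ → ℝ → ℂ
  | 0, t, x => E t x
  | 1, t, x => Complex.I / (2 * (t : ℂ)) * ((x : ℂ) * E t x)
  | (n + 2), t, x => Complex.I / (2 * (t : ℂ)) * ((x : ℂ) * GG (n + 1) t x + ((n : ℂ) + 1) * GG n t x)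

lemma GG_two (n : ℕ) (t x : ℝ) : GG (n + 2) t x = Complex.I / (2 * (t : ℂ)) *
    ((x : ℂ) * GG (n + 1) t x + ((n : ℂ) + 1) * GG n t x) := by rw [GG]

lemma E_dx (t x : ℝ) : HasDerivAt (fun x' => E t x') (GG 1 t x) x := by
  have h1 : HasDerivAt (fun x' : ℝ => (x' : ℂ)) 1 x := Complex.ofRealCLM.hasDerivAt
  have h := (((h1.pow 2).const_mul Complex.I).div_const (4 * (t : ℂ))).cexp.div_const
    ((4 * (Real.pi : ℂ) * Complex.I * (t : ℂ)) ^ ((1 : ℂ) / 2))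
  unfold E
  refine h.congr_deriv ?_
  simp only [GG, E, Pi.pow_apply]
  push_cast
  ring

lemma GG_dx (t x : ℝ) : ∀ n, HasDerivAt (fun x' => GG n t x') (GG (n + 1) t x) x
  | 0 => E_dx t x
  | 1 => by
    have h1 : HasDerivAt (fun x' : ℝ => (x' : ℂ)) 1 x := Complex.ofRealCLM.hasDerivAt
    have h := (h1.mul (E_dx t x)).const_mul (Complex.I / (2 * (t : ℂ)))
    refine h.congr_deriv ?_
    simp only [GG]
    push_cast
    ring
  | (n + 2) => by
    have h1 : HasDerivAt (fun x' : ℝ => (x' : ℂ)) 1 x := Complex.ofRealCLM.hasDerivAt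
    have h := ((h1.mul (GG_dx t x (n + 1))).add ((GG_dx t x n).const_mul ((n : ℂ) + 1))).const_mul
      (Complex.I / (2 * (t : ℂ)))
    refine h.congr_deriv ?_
    rw [show n + 2 + 1 = (n + 1) + 2 from rfl, GG_two (n + 1)]
    push_cast
    ring

lemma b_dt (t : ℝ) (ht : t ≠ 0) : HasDerivAt (fun t' : ℝ => Complex.I / (2 * (t' : ℂ)))
    (2 * Complex.I * (Complex.I / (2 * (t : ℂ))) ^ 2) t := by
  have h1 : HasDerivAt (fun x' : ℝ => (x' : ℂ)) 1 t := Complex.ofRealCLM.hasDerivAt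
  have ht' : (t : ℂ) ≠ 0 := by exact_mod_cast ht
  have h := (hasDerivAt_const t Complex.I).div (h1.const_mul 2) (by simpa using ht)
  refine h.congr_deriv ?_
  field_simp
  simp

lemma E_dt (t x : ℝ) (ht : t ≠ 0) : HasDerivAt (fun t' => E t' x) (Complex.I * GG 2 t x) t := by
  have h1 : HasDerivAt (fun x' : ℝ => (x' : ℂ)) 1 t := Complex.ofRealCLM.hasDerivAt
  have ht' : (t : ℂ) ≠ 0 := by exact_mod_cast ht
  have hpi : (Real.pi : ℂ) ≠ 0 := by exact_mod_cast Real.pi_ne_zero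
  have hs : (4 * (Real.pi : ℂ) * Complex.I * (t : ℂ)) ∈ Complex.slitPlane := by
    right
    simp [ht, Real.pi_ne_zero]
  have hz : (4 * (Real.pi : ℂ) * Complex.I * (t : ℂ)) ≠ 0 := Complex.slitPlane_ne_zero hs
  have hz2 : (4 * (Real.pi : ℂ) * Complex.I * (t : ℂ)) ^ ((1 : ℂ) / 2) ≠ 0 := by
    simp [Complex.cpow_eq_zero_iff, ht, Real.pi_ne_zero]
  have hA := ((hasDerivAt_const t (Complex.I * (x : ℂ) ^ 2)).div (h1.const_mul 4)
    (by simpa using ht)).cexp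
  have hB : HasDerivAt (fun t' : ℝ => (4 * (Real.pi : ℂ) * Complex.I * (t' : ℂ)) ^ ((1 : ℂ) / 2))
      _ t := (HasDerivAt.cpow_const (c := (1 : ℂ) / 2)
        ((hasDerivAt_id (t : ℂ)).const_mul (4 * (Real.pi : ℂ) * Complex.I)) hs).comp_ofReal
  have h := hA.div hB hz2
  refine h.congr_deriv ?_
  simp only [id]
  rw [Complex.cpow_sub _ _ hz, Complex.cpow_one]
  simp only [GG, E, Pi.div_apply]
  generalize (4 * (Real.pi : ℂ) * Complex.I * (t : ℂ)) ^ ((1 : ℂ) / 2) = w at *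
  generalize Complex.exp (Complex.I * (x : ℂ) ^ 2 / (4 * (t : ℂ))) = e
  have hI := Complex.I_sq
  have hI3 : Complex.I ^ 3 = - Complex.I := by rw [pow_succ, hI]; ring
  field_simp
  ring_nf
  simp only [hI3, hI]
  ring

lemma GG_dt (t x : ℝ) (ht : t ≠ 0) :
    ∀ n, HasDerivAt (fun t' => GG n t' x) (Complex.I * GG (n + 2) t x) t
  | 0 => E_dt t x ht
  | 1 => by
    have h := (b_dt t ht).mul ((E_dt t x ht).const_mul (x : ℂ))
    refine h.congr_deriv ?_
    simp only [GG]
    push_cast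
    ring
  | (n + 2) => by
    have h := (b_dt t ht).mul (((GG_dt t x ht (n + 1)).const_mul (x : ℂ)).add
      ((GG_dt t x ht n).const_mul ((n : ℂ) + 1)))
    refine h.congr_deriv ?_
    rw [GG_two (n + 2)]
    simp only [Pi.add_apply]
    have : GG (n + 2) t x = Complex.I / (2 * (t : ℂ)) *
      ((x : ℂ) * GG (n + 1) t x + ((n : ℂ) + 1) * GG n t x) := by rw [GG]
    push_cast
    rw [show n + 1 + 2 = n + 2 + 1 from rfl]
    linear_combination (-2 * Complex.I * (Complex.I / (2 * (t : ℂ)))) * this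

lemma iter_t (x : ℝ) (l : ℕ) : ∀ t : ℝ, t ≠ 0 →
    iteratedDeriv l (fun t' => E t' x) t = Complex.I ^ l * GG (2 * l) t x := by
  induction l with
  | zero => intro t ht; simp [GG]
  | succ l ih =>
    intro t ht
    rw [iteratedDeriv_succ]
    have : iteratedDeriv l (fun t' => E t' x) =ᶠ[nhds t]
        fun t => Complex.I ^ l * GG (2 * l) t x := by
      filter_upwards [isOpen_ne.mem_nhds ht] with s hs using ih s hs
    rw [this.deriv_eq, ((GG_dt t x ht (2 * l)).const_mul _).deriv]
    rw [show 2 * (l + 1) = 2 * l + 2 by ring]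
    ring

lemma iter_x (t : ℝ) (c : ℂ) (m k : ℕ) :
    iteratedDeriv k (fun x => c * GG m t x) = fun x => c * GG (m + k) t x := by
  induction k with
  | zero => simp
  | succ k ih =>
    rw [iteratedDeriv_succ, ih]
    funext x
    exact ((GG_dx t x (m + k)).const_mul c).deriv

lemma E_norm (t₁ t x : ℝ) (ht₁ : 0 < t₁) (ht : t₁ ≤ |t|) :
    ‖E t x‖ ≤ 1 / (4 * Real.pi * t₁) ^ ((1 : ℝ) / 2) := by
  have h0 : t ≠ 0 := by rintro rfl; simp at ht; linarith
  have hz : (4 * (Real.pi : ℂ) * Complex.I * (t : ℂ)) ≠ 0 := by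
    simp [h0, Real.pi_ne_zero]
  have hpi := Real.pi_pos
  unfold E
  rw [norm_div, Complex.norm_cpow_of_ne_zero hz]
  have e1 : Complex.I * (x : ℂ) ^ 2 / (4 * (t : ℂ)) = ((x ^ 2 / (4 * t) : ℝ) : ℂ) * Complex.I := by
    push_cast; ring
  have e2 : ((1 : ℂ) / 2) = (((1 : ℝ) / 2 : ℝ) : ℂ) := by push_cast; rfl
  rw [e1, Complex.norm_exp_ofReal_mul_I, e2, Complex.ofReal_im, Complex.ofReal_re]
  simp only [mul_zero, Real.exp_zero, div_one]
  have e3 : ‖4 * (Real.pi : ℂ) * Complex.I * (t : ℂ)‖ = 4 * Real.pi * |t| := by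
    simp [abs_of_pos hpi]
  rw [e3]
  gcongr

lemma GG_norm (t₁ L t x M B : ℝ) (ht₁ : 0 < t₁) (hL : 0 < L) (ht : t₁ ≤ |t|) (hx : |x| ≤ L)
    (hM : ‖E t x‖ ≤ M) (hB : B = 1 + 1 / (2 * t₁) * (L + 1)) :
    ∀ n : ℕ, ‖GG n t x‖ ≤ M * B ^ n * Real.sqrt (n.factorial) := by
  have hM0 : 0 ≤ M := (norm_nonneg _).trans hM
  have hb : ‖Complex.I / (2 * (t : ℂ))‖ ≤ 1 / (2 * t₁) := by
    simp only [norm_div, norm_mul, Complex.norm_I, Complex.norm_real, Real.norm_eq_abs]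
    simp only [Complex.norm_ofNat]
    gcongr
  have hb0 : 0 < 1 / (2 * t₁) := by positivity
  generalize 1 / (2 * t₁) = β at *
  have hB1 : 1 ≤ B := by rw [hB]; nlinarith
  have hB2 : β * (L + 1) ≤ B := by rw [hB]; linarith
  intro n
  induction n using Nat.strong_induction_on with
  | _ n ih =>
  match n, ih with
  | 0, _ => simpa [GG] using hM
  | 1, _ =>
    simp only [GG, norm_mul, Complex.norm_real, Real.norm_eq_abs]
    simp only [Nat.factorial_one, Nat.cast_one, Real.sqrt_one, pow_one, mul_one]
    calc _ ≤ β * (L * M) := by gcongr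
      _ = M * (β * L) := by ring
      _ ≤ M * B := by gcongr; nlinarith
  | n + 2, ih =>
    have h1 := ih (n + 1) (by omega)
    have h0 := ih n (by omega)
    rw [GG]
    have s1 : Real.sqrt ((n + 1).factorial) ≤ Real.sqrt ((n + 2).factorial) := by
      apply Real.sqrt_le_sqrt
      exact_mod_cast Nat.factorial_le (by omega)
    have s0 : ((n : ℝ) + 1) * Real.sqrt (n.factorial) ≤ Real.sqrt ((n + 2).factorial) := by
      apply Real.le_sqrt_of_sq_le
      rw [mul_pow, Real.sq_sqrt (by positivity), Nat.factorial_succ, Nat.factorial_succ]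
      push_cast
      have : (0 : ℝ) ≤ n.factorial := by positivity
      have h : ((n : ℝ) + 1) ^ 2 ≤ (n + 1 + 1) * (n + 1) := by nlinarith
      nlinarith [mul_le_mul_of_nonneg_right h this]
    have hn : ‖((n : ℂ) + 1)‖ = (n : ℝ) + 1 := by
      have : ((n : ℂ) + 1) = ((n + 1 : ℕ) : ℂ) := by push_cast; rfl
      rw [this, Complex.norm_natCast]; push_cast; rfl
    set S := Real.sqrt ((n + 2).factorial) with hS
    have hS0 : 0 ≤ S := Real.sqrt_nonneg _
    calc ‖Complex.I / (2 * (t : ℂ)) * ((x : ℂ) * GG (n + 1) t x + ((n : ℂ) + 1) * GG n t x)‖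
        ≤ β * (L * (M * B ^ (n + 1) * Real.sqrt ((n + 1).factorial)) +
            ((n : ℝ) + 1) * (M * B ^ n * Real.sqrt (n.factorial))) := by
          rw [norm_mul]
          gcongr
          refine (norm_add_le _ _).trans ?_
          rw [norm_mul, norm_mul, hn, Complex.norm_real, Real.norm_eq_abs]
          gcongr
      _ = β * (L * (M * B ^ (n + 1) * Real.sqrt ((n + 1).factorial)) +
            M * B ^ n * (((n : ℝ) + 1) * Real.sqrt (n.factorial))) := by ring
      _ ≤ β * (L * (M * B ^ (n + 1) * S) + M * B ^ (n + 1) * S) := by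
          have : B ^ n ≤ B ^ (n + 1) := pow_le_pow_right₀ hB1 (by omega)
          gcongr
      _ = (M * B ^ (n + 1) * S) * (β * (L + 1)) := by ring
      _ ≤ (M * B ^ (n + 1) * S) * B := by gcongr
      _ = M * B ^ (n + 2) * S := by ring

lemma fact_le (k l : ℕ) : (2 * l + k).factorial ≤ 2 ^ k * 2 ^ (4 * l) * k.factorial * l.factorial ^ 2 := by
  have key : ∀ a b : ℕ, (a + b).factorial ≤ 2 ^ (a + b) * (a.factorial * b.factorial) := by
    intro a b
    rw [← Nat.add_choose_mul_factorial_mul_factorial a b, mul_assoc]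
    gcongr
    exact Nat.choose_le_two_pow _ _
  calc (2 * l + k).factorial ≤ 2 ^ (2 * l + k) * ((2 * l).factorial * k.factorial) := key _ _
    _ ≤ 2 ^ (2 * l + k) * ((2 ^ (l + l) * (l.factorial * l.factorial)) * k.factorial) := by
      gcongr
      rw [two_mul]; exact key _ _
    _ = _ := by ring

theorem stmt17 (t₁ L : ℝ) (ht₁ : 0 < t₁) (hL : 0 < L) :
    ∃ M R : ℝ, 0 < M ∧ 0 < R ∧
      ∀ (k l : ℕ) (t x : ℝ), t₁ ≤ |t| → |x| ≤ L →
        ‖iteratedDeriv k (fun x' => iteratedDeriv l (fun t' => E t' x') t) x‖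
          ≤ M * ((k.factorial : ℝ) ^ ((1 : ℝ) / 2) / (R / Real.sqrt 2) ^ k) *
              ((l.factorial : ℝ) / (R / 2) ^ (2 * l)) := by
  obtain ⟨B, hB⟩ : ∃ B, B = 1 + 1 / (2 * t₁) * (L + 1) := ⟨_, rfl⟩
  have hB0 : 0 < B := by rw [hB]; positivity
  obtain ⟨M, hM⟩ : ∃ M, M = 1 / (4 * Real.pi * t₁) ^ ((1 : ℝ) / 2) := ⟨_, rfl⟩
  have hpi := Real.pi_pos
  have hM0 : 0 < M := by rw [hM]; positivity
  refine ⟨M, 1 / B, hM0, by positivity, ?_⟩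
  intro k l t x ht hx
  have h0 : t ≠ 0 := by rintro rfl; simp at ht; linarith
  have e : (fun x' => iteratedDeriv l (fun t' => E t' x') t) =
      fun x' => Complex.I ^ l * GG (2 * l) t x' := by
    funext x'; exact iter_t x' l t h0
  rw [e, iter_x]
  simp only [norm_mul, norm_pow, Complex.norm_I, one_pow, one_mul]
  refine (GG_norm t₁ L t x M B ht₁ hL ht hx (hM ▸ E_norm t₁ t x ht₁ ht) hB _).trans ?_
  have hs : Real.sqrt ((2 * l + k).factorial) ≤
      Real.sqrt 2 ^ k * 2 ^ (2 * l) * Real.sqrt k.factorial * l.factorial := by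
    apply Real.sqrt_le_iff.2 ⟨by positivity, ?_⟩
    have h := fact_le k l
    have h' : ((2 * l + k).factorial : ℝ) ≤ 2 ^ k * 2 ^ (4 * l) * k.factorial * l.factorial ^ 2 := by
      exact_mod_cast h
    refine h'.trans (le_of_eq ?_)
    simp only [mul_pow]
    have q : (Real.sqrt 2 ^ k) ^ 2 = 2 ^ k := by
      rw [← pow_mul, mul_comm k 2, pow_mul, Real.sq_sqrt (by positivity)]
    rw [Real.sq_sqrt (by positivity), q, ← pow_mul]
    ring
  rw [← Real.sqrt_eq_rpow]
  have h2 : 0 < Real.sqrt 2 := by positivity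
  calc _ ≤ M * B ^ (2 * l + k) *
        (Real.sqrt 2 ^ k * 2 ^ (2 * l) * Real.sqrt k.factorial * l.factorial) := by gcongr
    _ = _ := by
      simp only [div_pow, one_pow, pow_add]
      field_simp
end
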